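/- arXiv:2401.13582 — 3 statements merged into one kernel-verified Lean document; each statement's English description precedes it below -/
import Mathlib

section
/- Let p be a prime number, let G be a finite p-group, and let M be a finite abelian p-group (every element of M has p-power order) equipped with an action of G by group automorphisms. If the group of G-coinvariants M_G = M / ⟨g • m − m : g ∈ G, m ∈ M⟩ is trivial, then M is trivial. -/
/-!
The argument is by Pontryagin duality. The `p`-group `G` acts on the finite set of complex
characters of `M`, which has the same cardinality as `M`. If `M` is nonzero, this cardinality is
divisible by `p`, so, the trivial character being fixed, the orbit-counting congruence yields a
nontrivial `G`-invariant character. Such a character kills every `g • m - m`, i.e. factors through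
the coinvariants, which are therefore nonzero.
-/

/-- The contragredient action `(g • χ) m = χ (g⁻¹ • m)` of `G` on the complex characters of `M`. -/
@[reducible]
noncomputable def dualMulAction (G M : Type*) [Group G] [AddCommGroup M] [DistribMulAction G M] :
    MulAction G (AddChar M ℂ) where
  smul g χ := χ.compAddMonoidHom (DistribSMul.toAddMonoidHom M g⁻¹)
  one_smul χ := by
    ext m
    change χ ((1 : G)⁻¹ • m) = χ m
    simp
  mul_smul g h χ := by
    ext m
    change χ ((g * h)⁻¹ • m) = χ (h⁻¹ • g⁻¹ • m)
    rw [mul_inv_rev, mul_smul]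

/-- Let `p` be a prime, `G` a finite `p`-group, and `M` a finite abelian
`p`-group (every element of `M` has `p`-power order) with an action of `G` by group
automorphisms.  If the group of `G`-coinvariants `M_G = M / ⟨g • m - m⟩` is trivial
(equivalently, the subgroup generated by the elements `g • m - m` is all of `M`),
then `M` is trivial. -/
theorem coinvariants_trivial_implies_trivial
    (p : ℕ) (hp : p.Prime) (G : Type*) [Group G] [Finite G] (hG : IsPGroup p G)
    (M : Type*) [AddCommGroup M] [Finite M]
    (hM : ∀ m : M, ∃ k : ℕ, p ^ k • m = 0)
    [DistribMulAction G M]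
    (hcoinv : AddSubgroup.closure {x : M | ∃ (g : G) (m : M), x = g • m - m} = ⊤) :
    ∀ m : M, m = 0 := by
  intro m
  by_contra hm
  have : Fact p.Prime := ⟨hp⟩
  have hdvd : p ∣ Nat.card M := by
    obtain ⟨k, hk⟩ := hM m
    obtain ⟨j, -, hj⟩ := (Nat.dvd_prime_pow hp).1 (addOrderOf_dvd_of_nsmul_eq_zero hk)
    have hj0 : j ≠ 0 := by
      rintro rfl
      exact hm (AddMonoid.addOrderOf_eq_one_iff.1 (by simpa using hj))
    exact ((dvd_pow_self p hj0).trans hj.symm.dvd).trans (addOrderOf_dvd_natCard m)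
  have hcard : Nat.card (AddChar M ℂ) = Nat.card M := by
    have := Fintype.ofFinite M
    rw [Nat.card_eq_fintype_card, Nat.card_eq_fintype_card, AddChar.card_eq]
  let := dualMulAction G M
  have hone : (1 : AddChar M ℂ) ∈ MulAction.fixedPoints G (AddChar M ℂ) := by
    intro g
    ext x
    rfl
  obtain ⟨χ, hχ, hne⟩ := hG.exists_fixed_point_of_prime_dvd_card_of_fixed_point
    (AddChar M ℂ) (hcard ▸ hdvd) hone
  have hinv (g : G) (x : M) : χ (g • x) = χ x := by
    have h : χ (g⁻¹ • g • x) = χ (g • x) := DFunLike.congr_fun (hχ g) (g • x)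
    rw [← h, inv_smul_smul]
  apply hne
  ext x
  have hx : x ∈ AddSubgroup.closure {x : M | ∃ (g : G) (m : M), x = g • m - m} :=
    hcoinv ▸ AddSubgroup.mem_top x
  rw [AddChar.one_apply]
  symm
  induction hx using AddSubgroup.closure_induction with
  | mem x hx =>
    obtain ⟨g, y, rfl⟩ := hx
    rw [AddChar.map_sub_eq_div, hinv, div_self (χ.val_isUnit y).ne_zero]
  | zero => exact χ.map_zero_eq_one
  | add x y _ _ hx hy => rw [AddChar.map_add_eq_mul, hx, hy, one_mul]
  | neg x _ hx => rw [AddChar.map_neg_eq_inv, hx, inv_one]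
end

section
/- For any prime number p, the number of matrices A in SL₂(𝔽_p) (2×2 matrices over the field with p elements having determinant 1) whose trace equals 2 is exactly p². -/
/-!
A matrix of trace `2` over a field has the form `!![1 + x, b; c, 1 - x]`, and its determinant is `1`
exactly when `x ^ 2 + b * c = 0`. If `b ≠ 0`, then `x` is arbitrary and `c = -x ^ 2 / b`; if `b = 0`,
then `x = 0` and `c` is arbitrary. Hence `A ↦ (b, x)` for `b ≠ 0`, `A ↦ (0, c)` for `b = 0`,
is a bijection onto `F × F`, which has `p ^ 2` elements when `F = ZMod p`.
-/

/-- The parametrization of the trace-`2` elements of `SL₂(F)` by pairs `(b, t)`: `b` is the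
upper right entry, and `t` is the lower left entry if `b = 0` and the upper left entry minus `1`
otherwise. -/
def traceTwoEquiv (F : Type*) [Field F] [DecidableEq F] :
    {A : Matrix.SpecialLinearGroup (Fin 2) F // Matrix.trace (A : Matrix (Fin 2) (Fin 2) F) = 2} ≃
      F × F where
  toFun A := (A.1.1 0 1, if A.1.1 0 1 = 0 then A.1.1 1 0 else A.1.1 0 0 - 1)
  invFun q :=
    if hb : q.1 = 0 then
      ⟨⟨!![1, 0; q.2, 1], by simp [Matrix.det_fin_two]⟩, by
        simp [Matrix.trace_fin_two, one_add_one_eq_two]⟩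
    else
      ⟨⟨!![1 + q.2, q.1; -q.2 ^ 2 / q.1, 1 - q.2], by
        simp only [Matrix.det_fin_two_of]
        field_simp
        ring⟩, by
        simp only [Matrix.trace_fin_two_of]
        ring⟩
  left_inv := by
    rintro ⟨⟨A, hdet⟩, htr⟩
    have htr' : A 0 0 + A 1 1 = 2 := by simpa [Matrix.trace_fin_two] using htr
    have hd : A 1 1 = 2 - A 0 0 := by linear_combination htr'
    rw [Matrix.det_fin_two, hd] at hdet
    by_cases hb : A 0 1 = 0
    · have ha : A 0 0 = 1 := by
        have h : (A 0 0 - 1) ^ 2 = 0 := by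
          rw [hb] at hdet
          linear_combination -hdet
        exact sub_eq_zero.mp (pow_eq_zero_iff two_ne_zero |>.mp h)
      have hd1 : A 1 1 = 1 := by
        rw [hd, ha]
        ring
      apply Subtype.ext
      apply Subtype.ext
      ext i j
      fin_cases i <;> fin_cases j <;> simp [hb, ha, hd1]
    · have hc : -(A 0 0 - 1) ^ 2 / A 0 1 = A 1 0 := by
        rw [div_eq_iff hb]
        linear_combination hdet
      have hd1 : 1 - (A 0 0 - 1) = A 1 1 := by
        rw [hd]
        ring
      apply Subtype.ext
      apply Subtype.ext
      ext i j
      fin_cases i <;> fin_cases j <;> simp [hb, hc, hd1]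
  right_inv := by
    rintro ⟨b, t⟩
    by_cases hb : b = 0 <;> simp [hb]

/-- For any prime `p`, the number of matrices in `SL₂(𝔽_p)` with trace equal
to `2` is exactly `p²`. -/
theorem card_SL2_trace_eq_two
    (p : ℕ) (hp : p.Prime) :
    Nat.card {A : Matrix.SpecialLinearGroup (Fin 2) (ZMod p) //
      Matrix.trace (A : Matrix (Fin 2) (Fin 2) (ZMod p)) = 2} = p ^ 2 := by
  haveI : Fact p.Prime := ⟨hp⟩
  rw [Nat.card_congr (traceTwoEquiv (ZMod p)), Nat.card_prod, Nat.card_zmod, sq]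
end

section
/- Let p be a prime number, G a group, and N a normal subgroup of G such that Q := G/N is a finite abelian group of order coprime to p. Let χ : Q → 𝔽_p^× be a group homomorphism, and let g : N → 𝔽_p be a nonzero (equivalently, surjective) group homomorphism to the additive group 𝔽_p satisfying g(σ x σ⁻¹) = χ(σN) · g(x) for all σ ∈ G and x ∈ N. Then ker(g) is a normal subgroup of G, and there is a group isomorphism from G/ker(g) to the semidirect product Q ⋉_χ 𝔽_p (where Q acts on the additive group 𝔽_p by q • t = χ(q)·t) which carries the subgroup N/ker(g) onto the canonical normal subgroup 𝔽_p of the semidirect product. -/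
/-!
The proof extends `g` to a crossed homomorphism `f : G → 𝔽_p`, that is
`f (σ τ) = f σ + χ(σN) f τ`. Then `σ ↦ (f σ, σN)` is a homomorphism from `G` to the semidirect
product; its kernel is `ker g` because `f` restricts to `g` on `N`, it is surjective because `g` is,
and it sends `N` onto `𝔽_p`.

The extension exists because `n = |G/N|` is invertible mod `p`: choosing a set-theoretic section
`s` of `G → G/N`, one averages the values of `g` on the elements `σ s(q) s(σq)⁻¹ ∈ N`,
`f σ = n⁻¹ ∑ q, g (σ s(q) s(σq)⁻¹)`.
This replaces the appeal to the Schur–Zassenhaus theorem by an explicit splitting.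
-/

/-- A `χ`-equivariant homomorphism `g : N → 𝔽_p` extends to a crossed homomorphism on `G` when the
index of `N` is prime to `p`: restriction to `N` is surjective onto equivariant homomorphisms,
with an explicit preimage obtained by averaging over `G ⧸ N`. -/
theorem exists_crossedHom_extending
    (p : ℕ) (hp : p.Prime) (G : Type) [Group G] (N : Subgroup G) [nN : N.Normal]
    [Finite (G ⧸ N)] (hcop : Nat.Coprime (Nat.card (G ⧸ N)) p)
    (χ : (G ⧸ N) →* (ZMod p)ˣ)
    (g : N →* Multiplicative (ZMod p))
    (hequiv : ∀ (σ : G) (x : N),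
      g ⟨σ * (x : G) * σ⁻¹, nN.conj_mem (x : G) x.2 σ⟩ =
        Multiplicative.ofAdd ((χ (QuotientGroup.mk σ) : ZMod p) *
          Multiplicative.toAdd (g x))) :
    ∃ f : G → ZMod p,
      (∀ σ τ : G, f (σ * τ) = f σ + (χ (QuotientGroup.mk σ) : ZMod p) * f τ) ∧
      ∀ x : N, f x = Multiplicative.toAdd (g x) := by
  have := Fact.mk hp
  have := Fintype.ofFinite (G ⧸ N)
  let s : G ⧸ N → G := Quotient.out
  have hs : ∀ q : G ⧸ N, ((s q : G) : G ⧸ N) = q := fun q => Quotient.out_eq q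
  have hmem : ∀ (σ : G) (q : G ⧸ N), σ * s q * (s ((σ : G ⧸ N) * q))⁻¹ ∈ N := by
    intro σ q
    rw [← QuotientGroup.eq_one_iff]
    simp [hs]
  let c : G → G ⧸ N → N := fun σ q => ⟨_, hmem σ q⟩
  have hn : (Nat.card (G ⧸ N) : ZMod p) ≠ 0 := by
    rw [Ne, ZMod.natCast_eq_zero_iff]
    exact (hp.coprime_iff_not_dvd).1 hcop.symm
  -- The relation `c(στ, q) = σ c(τ, q) σ⁻¹ · c(σ, τq)`, after applying `g`.
  have hc : ∀ σ τ q, Multiplicative.toAdd (g (c (σ * τ) q)) =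
      (χ (QuotientGroup.mk σ) : ZMod p) * Multiplicative.toAdd (g (c τ q)) +
        Multiplicative.toAdd (g (c σ ((τ : G ⧸ N) * q))) := by
    intro σ τ q
    have h1 : c (σ * τ) q =
        ⟨σ * (c τ q : G) * σ⁻¹, nN.conj_mem (c τ q : G) (c τ q).2 σ⟩ *
          c σ ((τ : G ⧸ N) * q) := by
      apply Subtype.ext
      simp only [c, Subgroup.coe_mul, QuotientGroup.mk_mul, mul_assoc]
      group
    rw [h1, map_mul, hequiv, toAdd_mul, toAdd_ofAdd]
  refine ⟨fun σ => (Nat.card (G ⧸ N) : ZMod p)⁻¹ *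
    ∑ q, Multiplicative.toAdd (g (c σ q)), ?_, ?_⟩
  · intro σ τ
    have h2 : ∑ q, Multiplicative.toAdd (g (c σ ((τ : G ⧸ N) * q))) =
        ∑ q, Multiplicative.toAdd (g (c σ q)) :=
      Equiv.sum_comp (Equiv.mulLeft (τ : G ⧸ N)) fun q => Multiplicative.toAdd (g (c σ q))
    simp only [hc, Finset.sum_add_distrib, ← Finset.mul_sum, h2]
    ring
  · intro x
    -- An element of `N` fixes every coset, so `c(x, q) = x` for all `q`.
    have h3 : ∀ q, c x q = x := by
      intro q
      apply Subtype.ext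
      have hx : ((x : G) : G ⧸ N) = 1 := (QuotientGroup.eq_one_iff _).2 x.2
      simp [c, hx]
    simp only [h3, Finset.sum_const, Finset.card_univ, nsmul_eq_mul, ← Nat.card_eq_fintype_card]
    rw [inv_mul_cancel_left₀ hn]

theorem surjective_of_ne_one (p : ℕ) (hp : p.Prime) {N : Type*} [Group N]
    (g : N →* Multiplicative (ZMod p)) (hg : g ≠ 1) : Function.Surjective g := by
  have := Fact.mk hp
  obtain ⟨x, hx⟩ := DFunLike.ne_iff.1 hg
  have ha : Multiplicative.toAdd (g x) ≠ 0 := fun h => hx (Multiplicative.toAdd.injective h)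
  intro t
  refine ⟨x ^ (Multiplicative.toAdd t / Multiplicative.toAdd (g x)).val, ?_⟩
  apply Multiplicative.toAdd.injective
  rw [map_pow, toAdd_pow, nsmul_eq_mul, ZMod.natCast_zmod_val, div_mul_cancel₀ _ ha]

/-- Let `p` be a prime, `G` a group, `N ⊴ G` a normal subgroup with
`Q := G/N` finite abelian of order coprime to `p`.  Let `χ : Q →* 𝔽_p^×` be a character and
`g : N → 𝔽_p` a nonzero group homomorphism to the additive group `𝔽_p` (written here as a
monoid homomorphism `N →* Multiplicative (ZMod p)`) satisfying
`g(σxσ⁻¹) = χ(σN) · g(x)` for all `σ ∈ G`, `x ∈ N`.  Then `ker g` is a normal subgroup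
of `G`, and there is a group isomorphism `G/ker(g) ≃ Q ⋉_χ 𝔽_p` — where `Q` acts on the
additive group `𝔽_p` through `χ`, i.e. `φ q (ofAdd t) = ofAdd (χ q * t)` — carrying the
subgroup `N/ker(g)` onto the canonical normal subgroup `𝔽_p` of the semidirect product. -/
theorem quotient_iso_semidirectProduct
    (p : ℕ) (hp : p.Prime) (G : Type) [Group G] (N : Subgroup G) [nN : N.Normal]
    [Finite (G ⧸ N)] (habel : ∀ a b : G ⧸ N, a * b = b * a)
    (hcop : Nat.Coprime (Nat.card (G ⧸ N)) p)
    (χ : (G ⧸ N) →* (ZMod p)ˣ)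
    (g : N →* Multiplicative (ZMod p)) (hg : g ≠ 1)
    (hequiv : ∀ (σ : G) (x : N),
      g ⟨σ * (x : G) * σ⁻¹, nN.conj_mem (x : G) x.2 σ⟩ =
        Multiplicative.ofAdd ((χ (QuotientGroup.mk σ) : ZMod p) *
          Multiplicative.toAdd (g x)))
    (φ : (G ⧸ N) →* MulAut (Multiplicative (ZMod p)))
    (hφ : ∀ (q : G ⧸ N) (t : ZMod p),
      φ q (Multiplicative.ofAdd t) = Multiplicative.ofAdd ((χ q : ZMod p) * t)) :
    ∃ hn : (Subgroup.map N.subtype g.ker).Normal,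
      letI := hn
      ∃ e : (G ⧸ Subgroup.map N.subtype g.ker) ≃*
          (Multiplicative (ZMod p) ⋊[φ] (G ⧸ N)),
        Subgroup.map e.toMonoidHom
            (Subgroup.map (QuotientGroup.mk' (Subgroup.map N.subtype g.ker)) N) =
          (SemidirectProduct.inl (φ := φ)).range := by
  obtain ⟨f, hmul, hfg⟩ := exists_crossedHom_extending p hp G N hcop χ g hequiv
  have hgs := surjective_of_ne_one p hp g hg
  let Φ : G →* Multiplicative (ZMod p) ⋊[φ] (G ⧸ N) := MonoidHom.mk'
    (fun σ => ⟨Multiplicative.ofAdd (f σ), (σ : G ⧸ N)⟩) (by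
      intro σ τ
      ext
      · simp [hmul, hφ]
      · simp)
  have hΦN : ∀ x : N, Φ x = SemidirectProduct.inl (g x) := by
    intro x
    ext
    · simp [Φ, hfg]
    · simp [Φ]
  have hright : ∀ σ : G, (Φ σ).right = (σ : G ⧸ N) := fun _ => rfl
  have hker : Subgroup.map N.subtype g.ker = Φ.ker := by
    ext σ
    constructor
    · rintro ⟨x, hx, rfl⟩
      have hx' : g x = 1 := hx
      rw [MonoidHom.mem_ker, Subgroup.subtype_apply, hΦN, hx', map_one]
    · intro h
      rw [MonoidHom.mem_ker] at h
      have hσ : σ ∈ N := by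
        rw [← QuotientGroup.eq_one_iff, ← hright, h, SemidirectProduct.one_right]
      refine ⟨⟨σ, hσ⟩, ?_, rfl⟩
      have h' := hΦN ⟨σ, hσ⟩
      rw [h] at h'
      exact SemidirectProduct.inl_injective (h'.symm.trans (map_one _).symm)
  have hsurj : Function.Surjective Φ := by
    intro y
    obtain ⟨σ, hσ⟩ := QuotientGroup.mk_surjective y.right
    obtain ⟨x, hx⟩ := hgs (y.left * (Φ σ).left⁻¹)
    refine ⟨x * σ, ?_⟩
    rw [map_mul, hΦN, hx]
    ext
    · simp
    · simp [hright, hσ]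
  have hn : (Subgroup.map N.subtype g.ker).Normal := hker ▸ Φ.normal_ker
  refine ⟨hn, (QuotientGroup.quotientMulEquivOfEq hker).trans
    (QuotientGroup.quotientKerEquivOfSurjective Φ hsurj), ?_⟩
  ext y
  constructor
  · rintro ⟨_, ⟨x, hx, rfl⟩, rfl⟩
    exact ⟨g ⟨x, hx⟩, (hΦN ⟨x, hx⟩).symm⟩
  · rintro ⟨t, rfl⟩
    obtain ⟨x, rfl⟩ := hgs t
    exact ⟨_, ⟨x, x.2, rfl⟩, hΦN x⟩
end
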